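/- Soundness of the tableau procedure: if the ELKh_n formula φ0 is satisfiable (some pointed model satisfies φ0), then the tableau T_{φ0} is not closed, i.e. some complete subtree of T_{φ0} contains no node whose label is blatantly inconsistent. -/

import Mathlib

/-!
Formalization of the logic of strategically knowing how (ELKh_n) and of the
tableau procedure for it.
-/

namespace ELKh

/-- Formulas of the language ELKh_n:
`φ ::= ⊥ | p | ¬φ | (φ ∧ φ) | K_i φ | Kh_i φ`. -/
inductive Formula (P I : Type) : Type
  | bot : Formula P I
  | atom : P → Formula P I
  | neg : Formula P I → Formula P I
  | and : Formula P I → Formula P I → Formula P I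
  | know : I → Formula P I → Formula P I
  | kh : I → Formula P I → Formula P I

variable {P I : Type}

/-- Models of ELKh_n: states with equivalence relations `∼ᵢ`, actions for each
agent, a transition relation for each action, and a valuation. -/
structure Model (P I : Type) where
  W : Type
  sim : I → W → W → Prop
  equiv : ∀ i, Equivalence (sim i)
  Act : I → Type
  R : (i : I) → Act i → W → W → Prop
  V : W → P → Prop

/-- Transition between `i`-equivalence classes (classes are represented by
member states): `[s]ⁱ →ₐ [t]ⁱ` iff some `s' ∈ [s]ⁱ`, `t' ∈ [t]ⁱ` have `R a s' t'`. -/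
def Model.ctrans (M : Model P I) (i : I) (a : M.Act i) (s t : M.W) : Prop :=
  ∃ s' t', M.sim i s s' ∧ M.sim i t t' ∧ M.R i a s' t'

/-- Uniformly executable strategies for agent `i`: partial functions from
`∼ᵢ`-equivalence classes to actions of `i` (hence constant on classes), whose
chosen action is executable at every member of the class. -/
structure Strategy (M : Model P I) (i : I) where
  act : M.W → Option (M.Act i)
  congr : ∀ s t, M.sim i s t → act s = act t
  exec : ∀ s a, act s = some a → ∀ t, M.sim i s t → ∃ u, M.R i a t u

namespace Strategy

variable {M : Model P I} {i : I}

/-- The `k`-th step of the sequence of classes `[δ 0][δ 1]⋯` is a σ-step. -/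
def Steps (σ : Strategy M i) (δ : ℕ → M.W) (k : ℕ) : Prop :=
  ∃ a, σ.act (δ k) = some a ∧ M.ctrans i a (δ k) (δ (k+1))

/-- `[δ 0]⋯[δ h]` is a (finite) possible execution of σ. -/
def FinExec (σ : Strategy M i) (δ : ℕ → M.W) (h : ℕ) : Prop :=
  ∀ k < h, σ.Steps δ k

/-- `[δ 0]⋯[δ h]` is a complete finite execution of σ (its end class is not in
the domain of σ). -/
def CompleteFinExec (σ : Strategy M i) (δ : ℕ → M.W) (h : ℕ) : Prop :=
  σ.FinExec δ h ∧ σ.act (δ h) = none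

/-- `[δ 0][δ 1]⋯` is an infinite possible execution of σ (such an execution is
automatically complete). -/
def InfExec (σ : Strategy M i) (δ : ℕ → M.W) : Prop :=
  ∀ k, σ.Steps δ k

end Strategy

/-- Satisfaction for ELKh_n.  `Kh_i φ` holds at `s` iff there is a strategy σ
for `i` such that all complete executions of σ starting from `[s]ⁱ` are finite
(equivalently: there is no infinite execution of σ from `[s]ⁱ`) and every state
of every end class of a complete (finite) execution from `[s]ⁱ` satisfies `φ`. -/
def Sat (M : Model P I) : M.W → Formula P I → Prop
  | _, .bot => False
  | s, .atom p => M.V s p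
  | s, .neg φ => ¬ Sat M s φ
  | s, .and φ ψ => Sat M s φ ∧ Sat M s ψ
  | s, .know i φ => ∀ t, M.sim i s t → Sat M t φ
  | s, .kh i φ => ∃ σ : Strategy M i,
      (∀ δ : ℕ → M.W, M.sim i s (δ 0) → ¬ σ.InfExec δ) ∧
      (∀ (δ : ℕ → M.W) (h : ℕ), M.sim i s (δ 0) → σ.CompleteFinExec δ h →
        ∀ t, M.sim i (δ h) t → Sat M t φ)

/-! ### Subformulas -/

/-- The set of subformulas of a formula. -/
def subf : Formula P I → Set (Formula P I)
  | .bot => {Formula.bot}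
  | .atom p => {Formula.atom p}
  | .neg φ => insert (Formula.neg φ) (subf φ)
  | .and φ ψ => insert (Formula.and φ ψ) (subf φ ∪ subf ψ)
  | .know i φ => insert (Formula.know i φ) (subf φ)
  | .kh i φ => insert (Formula.kh i φ) (subf φ)

/-- `sub⁺(φ₀) = {ψ, ¬ψ : ψ subformula of φ₀} ∪ {Kᵢψ, ¬Kᵢψ : Khᵢψ subformula of φ₀}`. -/
def subPlus (φ0 : Formula P I) : Set (Formula P I) :=
  {χ | ∃ ψ ∈ subf φ0, χ = ψ ∨ χ = Formula.neg ψ} ∪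
  {χ | ∃ i ψ, Formula.kh i ψ ∈ subf φ0 ∧
      (χ = Formula.know i ψ ∨ χ = Formula.neg (Formula.know i ψ))}

/-- `∼ψ`:  `∼¬χ = χ`, and `∼ψ = ¬ψ` otherwise. -/
def simNeg : Formula P I → Formula P I
  | .neg χ => χ
  | ψ => Formula.neg ψ

/-! ### Labeled trees -/

/-- Labels of tableau edges: `ε`, an agent `i`, or an action `a_{Khᵢψ}`. -/
inductive ELabel (P I : Type) : Type
  | eps : ELabel P I
  | ag : I → ELabel P I
  | act : I → Formula P I → ELabel P I

/-- Labeled rooted trees: each node is labeled with a set of formulas, each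
non-root node carries the label of the edge connecting it to its parent, and
`blockedBy n = some n'` records that the node `n` is blocked by `n'`. -/
structure LTree (P I : Type) where
  Node : Type
  root : Node
  parent : Node → Option Node
  depth : Node → ℕ
  label : Node → Set (Formula P I)
  elabel : Node → ELabel P I
  blockedBy : Node → Option Node
  parent_root : parent root = none
  eq_root : ∀ n, parent n = none → n = root
  depth_root : depth root = 0
  depth_parent : ∀ n m, parent n = some m → depth n = depth m + 1

variable (T : LTree P I)

/-- The children of a node. -/
def Children (n : T.Node) : Set T.Node := {m | T.parent m = some n}

/-- A node is a leaf iff it has no children. -/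
def IsLeaf (n : T.Node) : Prop := ∀ m, T.parent m ≠ some n

/-- `Ancestor T m n`: `m` is a proper ancestor of `n`. -/
def Ancestor (m n : T.Node) : Prop :=
  Relation.TransGen (fun a b => T.parent b = some a) m n

/-- `IAnc T i m n`: `m` is an `i`-ancestor of `n`, i.e. a proper ancestor of
`n` connected to `n` by a path all of whose edges are labeled `i` or `ε`. -/
inductive IAnc (i : I) : T.Node → T.Node → Prop
  | single {m n} : T.parent n = some m →
      (T.elabel n = ELabel.eps ∨ T.elabel n = ELabel.ag i) → IAnc i m n
  | cons {m k n} : T.parent n = some k →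
      (T.elabel n = ELabel.eps ∨ T.elabel n = ELabel.ag i) →
      IAnc i m k → IAnc i m n

/-! ### The tableau construction -/

/-- A set of formulas is blatantly inconsistent iff it contains `⊥` or some
pair `ψ, ¬ψ`. -/
def Blatant (Γ : Set (Formula P I)) : Prop :=
  Formula.bot ∈ Γ ∨ ∃ ψ, ψ ∈ Γ ∧ Formula.neg ψ ∈ Γ

/-- `AutoChecked Γ φ` holds iff none of the expansion rules (a)-(g) is
applicable to `φ` in the label `Γ`; such formulas are (and remain) marked
``checked'' by step (h) of the construction. -/
def AutoChecked (Γ : Set (Formula P I)) : Formula P I → Prop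
  | .neg (.neg ψ) => ψ ∈ Γ
  | .and ψ χ => ψ ∈ Γ ∧ χ ∈ Γ
  | .neg (.and ψ χ) =>
      (Formula.neg ψ ∈ Γ ∧ Formula.neg χ ∈ Γ) ∨
      (Formula.neg ψ ∈ Γ ∧ χ ∈ Γ) ∨ (ψ ∈ Γ ∧ Formula.neg χ ∈ Γ)
  | .know _ ψ => ψ ∈ Γ
  | .neg (.know _ ψ) => Formula.neg ψ ∈ Γ ∨ ψ ∈ Γ
  | .kh i ψ => Formula.neg (Formula.know i ψ) ∈ Γ ∨ Formula.know i ψ ∈ Γ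
  | .neg (.kh i ψ) => Formula.neg (Formula.know i ψ) ∈ Γ
  | _ => True

/-- All formulas of `Γ` are checked; nodes with such labels are the ``and''
nodes (expanded by step (2)), the remaining expanded nodes are ``or'' nodes. -/
def Saturated (Γ : Set (Formula P I)) : Prop := ∀ φ ∈ Γ, AutoChecked Γ φ

/-- The labels of the children created when one of the rules (a)-(g) processes
the formula `φ` at a node labeled `Γ`. -/
def orOut (Γ : Set (Formula P I)) : Formula P I → Set (Set (Formula P I))
  | .neg (.neg ψ) => {insert ψ Γ}
  | .and ψ χ => {insert ψ (insert χ Γ)}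
  | .neg (.and ψ χ) =>
      {insert (Formula.neg ψ) (insert (Formula.neg χ) Γ),
       insert (Formula.neg ψ) (insert χ Γ),
       insert ψ (insert (Formula.neg χ) Γ)}
  | .know _ ψ => {insert ψ Γ}
  | .neg (.know _ ψ) => {insert (Formula.neg ψ) Γ, insert ψ Γ}
  | .kh i ψ =>
      {insert (Formula.neg (Formula.know i ψ)) Γ, insert (Formula.know i ψ) Γ}
  | .neg (.kh i ψ) => {insert (Formula.neg (Formula.know i ψ)) Γ}
  | _ => ∅

/-- `Σ(n,¬Kᵢψ) = {¬ψ} ∪ Γ|Kᵢ ∪ Γ|¬Kᵢ ∪ Γ|Khᵢ ∪ Γ|¬Khᵢ` where `Γ = L(n)`. -/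
def SigmaSet (Γ : Set (Formula P I)) (i : I) (ψ : Formula P I) :
    Set (Formula P I) :=
  insert (Formula.neg ψ)
    {φ ∈ Γ | (∃ χ, φ = Formula.know i χ) ∨ (∃ χ, φ = Formula.neg (Formula.know i χ)) ∨
             (∃ χ, φ = Formula.kh i χ) ∨ (∃ χ, φ = Formula.neg (Formula.kh i χ))}

/-- Expansion condition for ``or'' nodes (step (1), rules (a)-(g)): some
unchecked formula of the label is processed and the children of the node are
exactly the prescribed `ε`-children. -/
def OrNodeCond (n : T.Node) : Prop :=
  ∃ φ ∈ T.label n, ¬ AutoChecked (T.label n) φ ∧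
    (∀ Δ ∈ orOut (T.label n) φ,
      ∃ m, T.parent m = some n ∧ T.elabel m = ELabel.eps ∧ T.label m = Δ ∧
        T.blockedBy m = none) ∧
    (∀ m, T.parent m = some n →
      T.elabel m = ELabel.eps ∧ T.label m ∈ orOut (T.label n) φ ∧
        T.blockedBy m = none)

/-- Expansion condition for ``and'' nodes (step (2), rules (i), (j), (k)): the
children of the node are exactly those prescribed by the three rules, and a
(k)-child is blocked iff some ancestor carries the same label. -/
def AndNodeCond (n : T.Node) : Prop :=
  (∀ i ψ, Formula.neg (Formula.know i ψ) ∈ T.label n →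
    ¬ (∃ n', IAnc T i n' n ∧ T.label n' = SigmaSet (T.label n) i ψ) →
    ∃ m, T.parent m = some n ∧ T.elabel m = ELabel.ag i ∧
      T.label m = SigmaSet (T.label n) i ψ ∧ T.blockedBy m = none) ∧
  (∀ i ψ, Formula.kh i ψ ∈ T.label n → Formula.neg (Formula.know i ψ) ∈ T.label n →
    ∃ m, T.parent m = some n ∧ T.elabel m = ELabel.act i ψ ∧
      T.label m = {Formula.know i ψ} ∧ T.blockedBy m = none) ∧
  (∀ i ψ χ, Formula.neg (Formula.kh i χ) ∈ T.label n →
    Formula.kh i ψ ∈ T.label n → Formula.neg (Formula.know i ψ) ∈ T.label n →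
    ∃ m, T.parent m = some n ∧ T.elabel m = ELabel.act i ψ ∧
      T.label m = {Formula.know i ψ, Formula.neg (Formula.kh i χ)} ∧
      ((∃ n', Ancestor T n' m ∧ T.label n' = T.label m) ↔ T.blockedBy m ≠ none)) ∧
  (∀ m, T.parent m = some n →
    (∃ i ψ, T.elabel m = ELabel.ag i ∧ Formula.neg (Formula.know i ψ) ∈ T.label n ∧
      T.label m = SigmaSet (T.label n) i ψ ∧
      ¬ (∃ n', IAnc T i n' n ∧ T.label n' = SigmaSet (T.label n) i ψ)) ∨
    (∃ i ψ, T.elabel m = ELabel.act i ψ ∧ Formula.kh i ψ ∈ T.label n ∧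
      Formula.neg (Formula.know i ψ) ∈ T.label n ∧
      T.label m = {Formula.know i ψ}) ∨
    (∃ i ψ χ, T.elabel m = ELabel.act i ψ ∧ Formula.neg (Formula.kh i χ) ∈ T.label n ∧
      Formula.kh i ψ ∈ T.label n ∧ Formula.neg (Formula.know i ψ) ∈ T.label n ∧
      T.label m = {Formula.know i ψ, Formula.neg (Formula.kh i χ)}))

/-- `T` is a tableau for `φ₀`: the root is labeled `{φ₀}`, blocked nodes are
blocked by an ancestor with the same label, blocked nodes and blatantly
inconsistent nodes are leaves, and every other node is expanded according to
step (1) (``or'' nodes) or step (2) (``and'' nodes) of the construction. -/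
structure IsTableau (φ0 : Formula P I) (T : LTree P I) : Prop where
  root_label : T.label T.root = {φ0}
  blocked_spec : ∀ n n', T.blockedBy n = some n' →
    Ancestor T n' n ∧ T.label n' = T.label n
  blocked_leaf : ∀ n, T.blockedBy n ≠ none → IsLeaf T n
  blatant_leaf : ∀ n, Blatant (T.label n) → IsLeaf T n
  or_node : ∀ n, ¬ Blatant (T.label n) → T.blockedBy n = none →
    ¬ Saturated (T.label n) → OrNodeCond T n
  and_node : ∀ n, ¬ Blatant (T.label n) → T.blockedBy n = none →
    Saturated (T.label n) → AndNodeCond T n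

/-! ### Subtrees -/

/-- A subtree: a set of nodes containing the root and closed under parents. -/
def IsSubtree (S : Set T.Node) : Prop :=
  T.root ∈ S ∧ ∀ n ∈ S, ∀ m, T.parent n = some m → m ∈ S

/-- A complete subtree: it contains the root, all children of each of its
``and'' non-leaf nodes, and at least one child of each of its ``or'' non-leaf
nodes. -/
def CompleteSubtree (S : Set T.Node) : Prop :=
  IsSubtree T S ∧
  (∀ n ∈ S, ¬ IsLeaf T n → Saturated (T.label n) → ∀ m ∈ Children T n, m ∈ S) ∧
  (∀ n ∈ S, ¬ IsLeaf T n → ¬ Saturated (T.label n) → ∃ m ∈ Children T n, m ∈ S)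

/-- A subtree is closed iff some of its nodes has a blatantly inconsistent
label; otherwise it is open. -/
def ClosedSubtree (S : Set T.Node) : Prop := ∃ n ∈ S, Blatant (T.label n)

/-- A tableau is closed iff all its complete subtrees are closed. -/
def TableauClosed : Prop := ∀ S : Set T.Node, CompleteSubtree T S → ClosedSubtree T S

/-! ### Maximal ε-paths and the induced model -/

/-- An `ε`-edge from `m` down to `n` inside the node set `S`. -/
def EpsStep (S : Set T.Node) (m n : T.Node) : Prop :=
  m ∈ S ∧ n ∈ S ∧ T.parent n = some m ∧ T.elabel n = ELabel.eps

/-- `n` is an `ε`-descendant of `m` inside `S` (reflexive-transitive). -/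
def EpsDesc (S : Set T.Node) : T.Node → T.Node → Prop :=
  Relation.ReflTransGen (EpsStep T S)

/-- A maximal `ε`-path of the subtree with node set `S`, recorded by its
initial node `top` and its end node `bot`.  Its label is `T.label bot`. -/
structure MaxEpsPath (T : LTree P I) (S : Set T.Node) where
  top : T.Node
  bot : T.Node
  top_mem : top ∈ S
  bot_mem : bot ∈ S
  desc : EpsDesc T S top bot
  top_max : ∀ m, ¬ EpsStep T S m top
  bot_max : ∀ m, ¬ EpsStep T S bot m

/-- The states of the induced model: non-blocked maximal `ε`-paths. -/
def PathW (T : LTree P I) (S : Set T.Node) : Type :=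
  {ρ : MaxEpsPath T S // T.blockedBy ρ.bot = none}

/-- `ρ₂` is an `i`-child path of `ρ₁`: `ρ₁ρ₂` is a path whose connecting edge
is labeled `i`. -/
def ISimStep (S : Set T.Node) (i : I) (ρ1 ρ2 : PathW T S) : Prop :=
  T.parent ρ2.1.top = some ρ1.1.bot ∧ T.elabel ρ2.1.top = ELabel.ag i

/-- The node `n'` lies on the maximal `ε`-path `ρ`. -/
def OnPath (S : Set T.Node) (ρ : MaxEpsPath T S) (n' : T.Node) : Prop :=
  EpsDesc T S ρ.top n' ∧ EpsDesc T S n' ρ.bot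

/-- The model `M^T` induced by the (complete) subtree with node set `S`:
states are the non-blocked maximal `ε`-paths, `∼ᵢ` is the least equivalence
relation containing the `i`-edge steps, actions of agent `i` are the actions
`a_{Khᵢψ}` labeling edges of the subtree, `(ρ, ρ') ∈ R_a` iff there is an
`a`-edge from the end of `ρ` to the start of a maximal `ε`-path `ρ''` where
`ρ'' = ρ'` or `ρ''` is blocked by a node lying on `ρ'`, and `ρ ∈ V(p)` iff
`p ∈ L(ρ)`. -/
def inducedModel (T : LTree P I) (S : Set T.Node) : Model P I where
  W := PathW T S
  sim := fun i => Relation.EqvGen (ISimStep T S i)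
  equiv := fun _ => Relation.EqvGen.is_equivalence _
  Act := fun i => {ψ : Formula P I // ∃ m n, m ∈ S ∧ n ∈ S ∧
    T.parent m = some n ∧ T.elabel m = ELabel.act i ψ}
  R := fun i a ρ1 ρ2 => ∃ ρ'' : MaxEpsPath T S,
    T.parent ρ''.top = some ρ1.1.bot ∧ T.elabel ρ''.top = ELabel.act i a.1 ∧
    (ρ'' = ρ2.1 ∨ ∃ n', T.blockedBy ρ''.bot = some n' ∧ OnPath T S ρ2.1 n')
  V := fun ρ p => Formula.atom p ∈ T.label ρ.1.bot

/-- `L(ρ)|Kᵢ`: the `Kᵢ`-formulas of `Γ`. -/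
def projK (i : I) (Γ : Set (Formula P I)) : Set (Formula P I) :=
  {φ ∈ Γ | ∃ ψ, φ = Formula.know i ψ}

/-- `L(ρ)|¬Kᵢ`: the `¬Kᵢ`-formulas of `Γ`. -/
def projNK (i : I) (Γ : Set (Formula P I)) : Set (Formula P I) :=
  {φ ∈ Γ | ∃ ψ, φ = Formula.neg (Formula.know i ψ)}

/-- `L(ρ)|Khᵢ`: the `Khᵢ`-formulas of `Γ`. -/
def projKh (i : I) (Γ : Set (Formula P I)) : Set (Formula P I) :=
  {φ ∈ Γ | ∃ ψ, φ = Formula.kh i ψ}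

/-- `L(ρ)|¬Khᵢ`: the `¬Khᵢ`-formulas of `Γ`. -/
def projNKh (i : I) (Γ : Set (Formula P I)) : Set (Formula P I) :=
  {φ ∈ Γ | ∃ ψ, φ = Formula.neg (Formula.kh i ψ)}

namespace Strategy

variable {M : Model P I} {i : I}

/-- Every execution of `σ` from `[s]ⁱ` terminates, and all states of all end classes lie in `X`. -/
def Achieves (σ : Strategy M i) (X : Set M.W) (s : M.W) : Prop :=
  (∀ δ : ℕ → M.W, M.sim i s (δ 0) → ¬ σ.InfExec δ) ∧
  (∀ (δ : ℕ → M.W) (h : ℕ), M.sim i s (δ 0) → σ.CompleteFinExec δ h →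
    ∀ t, M.sim i (δ h) t → t ∈ X)

theorem Achieves.of_sim {σ : Strategy M i} {X : Set M.W} {s t : M.W}
    (hσ : σ.Achieves X s) (hst : M.sim i s t) : σ.Achieves X t :=
  ⟨fun δ h0 => hσ.1 δ ((M.equiv i).trans hst h0),
    fun δ h h0 => hσ.2 δ h ((M.equiv i).trans hst h0)⟩

theorem achieves_congr {σ : Strategy M i} {X : Set M.W} {s t : M.W}
    (hst : M.sim i s t) : σ.Achieves X s ↔ σ.Achieves X t :=
  ⟨fun h => h.of_sim hst, fun h => h.of_sim ((M.equiv i).symm hst)⟩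

theorem Achieves.of_ctrans {σ : Strategy M i} {X : Set M.W} {s t : M.W} {a : M.Act i}
    (hσ : σ.Achieves X s) (ha : σ.act s = some a) (hst : M.ctrans i a s t) :
    σ.Achieves X t := by
  let cons : (ℕ → M.W) → ℕ → M.W := fun δ k => Nat.casesOn k s δ
  have cons_zero : ∀ δ : ℕ → M.W, M.sim i t (δ 0) → σ.Steps (cons δ) 0 := by
    intro δ h0
    obtain ⟨s', t', hs, ht, hR⟩ := hst
    exact ⟨a, ha, s', t', hs, (M.equiv i).trans ((M.equiv i).symm h0) ht, hR⟩
  refine ⟨fun δ h0 hinf => hσ.1 (cons δ) ((M.equiv i).refl s) ?_,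
    fun δ h h0 hc => hσ.2 (cons δ) (h + 1) ((M.equiv i).refl s) ⟨?_, hc.2⟩⟩
  · rintro (_ | k)
    · exact cons_zero δ h0
    · exact hinf k
  · rintro (_ | k) hk
    · exact cons_zero δ h0
    · exact hc.1 k (Nat.lt_of_succ_lt_succ hk)

theorem Achieves.of_steps {σ : Strategy M i} {X : Set M.W} {δ : ℕ → M.W} {k : ℕ}
    (hσ : σ.Achieves X (δ k)) (hk : σ.Steps δ k) : σ.Achieves X (δ (k + 1)) :=
  let ⟨_, ha, hst⟩ := hk
  hσ.of_ctrans ha hst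

/-- A strategy that achieves anything has a complete execution. -/
theorem Achieves.exists_completeFinExec {σ : Strategy M i} {X : Set M.W} {s : M.W}
    (hσ : σ.Achieves X s) : ∃ δ h, M.sim i s (δ 0) ∧ σ.CompleteFinExec δ h := by
  classical
  have hnext : ∀ t, ∃ u, ∀ a, σ.act t = some a → M.R i a t u := by
    intro t
    cases ha : σ.act t with
    | none => exact ⟨t, by simp⟩
    | some a =>
      obtain ⟨u, hu⟩ := σ.exec t a ha t ((M.equiv i).refl t)
      exact ⟨u, by rintro b ⟨⟩; exact hu⟩
  choose next hnext using hnext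
  let δ : ℕ → M.W := fun k => next^[k] s
  have hstep : ∀ k, σ.act (δ k) ≠ none → σ.Steps δ k := by
    intro k hk
    obtain ⟨a, ha⟩ := Option.ne_none_iff_exists'.mp hk
    refine ⟨a, ha, δ k, δ (k + 1), (M.equiv i).refl _, (M.equiv i).refl _, ?_⟩
    have : δ (k + 1) = next (δ k) := Function.iterate_succ_apply' next k s
    rw [this]
    exact hnext _ a ha
  have hend : ∃ h, σ.act (δ h) = none := by
    by_contra! hne
    exact hσ.1 δ ((M.equiv i).refl s) fun k => hstep k (hne k)
  exact ⟨δ, Nat.find hend, (M.equiv i).refl s,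
    fun k hk => hstep k (Nat.find_min hend hk), Nat.find_spec hend⟩

/-- The strategy that stops immediately achieves whatever is already known. -/
theorem exists_achieves_of_forall_sim {X : Set M.W} {s : M.W}
    (hX : ∀ t, M.sim i s t → t ∈ X) : ∃ σ : Strategy M i, σ.Achieves X s := by
  refine ⟨⟨fun _ => none, fun _ _ _ => rfl, by simp⟩, fun δ _ hinf => ?_,
    fun δ h h0 hc t ht => ?_⟩
  · obtain ⟨a, ha, -⟩ := hinf 0
    cases ha
  · cases h with
    | zero => exact hX t ((M.equiv i).trans h0 ht)
    | succ h =>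
      obtain ⟨a, ha, -⟩ := hc.1 0 h.succ_pos
      cases ha

/-- Strategies compose: if `σ` leads to states from which `X` is achievable, then `X` is
achievable. The composite follows, at each class from which `X` is achievable, the least
strategy (in some well-order) achieving `X` there, and `σ` elsewhere; the strategy followed can
only decrease along an execution. -/
theorem Achieves.exists_comp {σ : Strategy M i} {X : Set M.W} {s : M.W}
    (hσ : σ.Achieves {t | ∃ τ : Strategy M i, τ.Achieves X t} s) :
    ∃ τ : Strategy M i, τ.Achieves X s := by
  classical
  obtain ⟨_, _⟩ := exists_wellFoundedLT (Strategy M i)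
  let A : M.W → Set (Strategy M i) := fun t => {τ | τ.Achieves X t}
  have A_congr : ∀ {t u}, M.sim i t u → A t = A u := fun h =>
    Set.ext fun _ => achieves_congr h
  let pick : Set (Strategy M i) → Strategy M i := fun B =>
    if hB : B.Nonempty then wellFounded_lt.min B hB else σ
  have pick_mem : ∀ {B}, B.Nonempty → pick B ∈ B := by
    intro B hB
    simp only [pick, dif_pos hB]
    exact wellFounded_lt.min_mem B hB
  have pick_le : ∀ {B τ}, τ ∈ B → pick B ≤ τ := by
    intro B τ hτ
    simp only [pick, dif_pos (Set.nonempty_of_mem hτ)]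
    exact not_lt.mp (wellFounded_lt.not_lt_min B hτ)
  have pick_of_empty : ∀ {B}, ¬ B.Nonempty → pick B = σ := fun hB => dif_neg hB
  let τ : Strategy M i :=
    { act := fun t => (pick (A t)).act t
      congr := fun t u h => by rw [A_congr h]; exact (pick (A u)).congr t u h
      exec := fun t => (pick (A t)).exec t }
  have pick_steps : ∀ {δ k}, τ.Steps δ k → (pick (A (δ k))).Steps δ k := fun h => h
  have pick_next : ∀ {δ k}, τ.Steps δ k → (A (δ k)).Nonempty →
      pick (A (δ k)) ∈ A (δ (k + 1)) := fun hk hne =>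
    Achieves.of_steps (pick_mem hne) (pick_steps hk)
  refine ⟨τ, fun δ h0 hinf => ?_, fun δ h h0 hc t ht => ?_⟩
  · by_cases hex : ∃ k, (A (δ k)).Nonempty
    · obtain ⟨k, hk⟩ := hex
      have hne : ∀ j, (A (δ (k + j))).Nonempty := by
        intro j
        induction j with
        | zero => exact hk
        | succ j ih => exact ⟨_, pick_next (hinf _) ih⟩
      have hanti : Antitone fun j => pick (A (δ (k + j))) :=
        antitone_nat_of_succ_le fun j => pick_le (pick_next (hinf _) (hne j))
      obtain ⟨_, ⟨j, rfl⟩, hmin⟩ := (wellFounded_lt (α := Strategy M i)).has_min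
        (Set.range fun j => pick (A (δ (k + j)))) (Set.range_nonempty _)
      have hconst : ∀ l, pick (A (δ (k + (j + l)))) = pick (A (δ (k + j))) := fun l =>
        le_antisymm (hanti (Nat.le_add_right j l)) (not_lt.mp (hmin _ ⟨j + l, rfl⟩))
      refine (pick_mem (hne j)).1 (fun l => δ (k + (j + l))) ((M.equiv i).refl _) fun l => ?_
      rw [← hconst l]
      exact pick_steps (hinf (k + (j + l)))
    · push Not at hex
      refine hσ.1 δ h0 fun k => ?_
      have := pick_steps (hinf k)
      rwa [pick_of_empty (by simp [hex k])] at this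
  · have hne : (A (δ h)).Nonempty := by
      by_contra hemp
      have hprefix : ∀ k ≤ h, ¬ (A (δ k)).Nonempty := by
        intro k hk
        induction hk using Nat.decreasingInduction with
        | self => exact hemp
        | of_succ k hk ih => exact fun hne => ih ⟨_, pick_next (hc.1 k hk) hne⟩
      have hend : σ.act (δ h) = none := by
        rw [← pick_of_empty hemp]; exact hc.2
      refine hemp (hσ.2 δ h h0 ⟨fun k hk => ?_, hend⟩ (δ h) ((M.equiv i).refl _))
      have := pick_steps (hc.1 k hk)
      rwa [pick_of_empty (hprefix k hk.le)] at this
    exact (pick_mem hne).2 (fun _ => δ h) 0 ((M.equiv i).refl _)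
      ⟨fun _ hk => absurd hk (Nat.not_lt_zero _), hc.2⟩ t ht

end Strategy

section Satisfaction

variable {M : Model P I} {i : I} {s t : M.W} {φ χ : Formula P I}

theorem sat_kh : Sat M s (.kh i φ) ↔ ∃ σ : Strategy M i, σ.Achieves {t | Sat M t φ} s :=
  Iff.rfl

theorem sat_know_congr (h : M.sim i s t) : Sat M s (.know i φ) ↔ Sat M t (.know i φ) :=
  ⟨fun hs u hu => hs u ((M.equiv i).trans h hu),
    fun ht u hu => ht u ((M.equiv i).trans ((M.equiv i).symm h) hu)⟩

theorem sat_kh_congr (h : M.sim i s t) : Sat M s (.kh i φ) ↔ Sat M t (.kh i φ) :=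
  exists_congr fun _ => Strategy.achieves_congr h

theorem Sat.kh_of_know (h : Sat M s (.know i φ)) : Sat M s (.kh i φ) :=
  Strategy.exists_achieves_of_forall_sim h

theorem Sat.kh_of_kh_kh (h : Sat M s (.kh i (.kh i φ))) : Sat M s (.kh i φ) :=
  let ⟨_, hσ⟩ := sat_kh.mp h
  hσ.exists_comp

theorem Strategy.Achieves.know_at_end {σ : Strategy M i}
    (hσ : σ.Achieves {t | Sat M t φ} s) {δ : ℕ → M.W} {h : ℕ} (h0 : M.sim i s (δ 0))
    (hc : σ.CompleteFinExec δ h) : Sat M (δ h) (.know i φ) :=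
  hσ.2 δ h h0 hc

theorem Sat.exists_know_of_kh (h : Sat M s (.kh i φ)) : ∃ t, Sat M t (.know i φ) :=
  let ⟨_, hσ⟩ := sat_kh.mp h
  let ⟨_, _, h0, hc⟩ := hσ.exists_completeFinExec
  ⟨_, hσ.know_at_end h0 hc⟩

theorem Sat.exists_know_and_not_kh (h : Sat M s (.kh i φ)) (hχ : ¬ Sat M s (.kh i χ)) :
    ∃ t, Sat M t (.know i φ) ∧ ¬ Sat M t (.kh i χ) := by
  obtain ⟨σ, hσ⟩ := sat_kh.mp h
  by_contra! hall
  refine hχ (Sat.kh_of_kh_kh ⟨σ, hσ.1, fun δ k h0 hc t ht => ?_⟩)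
  exact (sat_kh_congr ht).mp (hall _ (hσ.know_at_end h0 hc))

end Satisfaction

/-- Some state of `M` satisfies all formulas of `Γ`. -/
def SatIn (M : Model P I) (Γ : Set (Formula P I)) : Prop :=
  ∃ s, ∀ φ ∈ Γ, Sat M s φ

section SatIn

variable {M : Model P I} {Γ : Set (Formula P I)}

theorem SatIn.not_blatant (h : SatIn M Γ) : ¬ Blatant Γ := by
  obtain ⟨s, hs⟩ := h
  rintro (hbot | ⟨ψ, hψ, hnψ⟩)
  · exact hs _ hbot
  · exact hs _ hnψ (hs _ hψ)

/-- The expansion rules for or-nodes preserve satisfiability in `M`. -/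
theorem SatIn.exists_orOut (h : SatIn M Γ) {φ : Formula P I} (hφ : φ ∈ Γ)
    (hun : ¬ AutoChecked Γ φ) : ∃ Δ ∈ orOut Γ φ, SatIn M Δ := by
  obtain ⟨s, hs⟩ := h
  have key : ∀ {χ}, Sat M s χ → ∀ {Δ : Set (Formula P I)}, (∀ θ ∈ Δ, Sat M s θ) →
      ∀ θ ∈ insert χ Δ, Sat M s θ := fun hχ _ hΔ =>
    Set.forall_mem_insert.mpr ⟨hχ, hΔ⟩
  have key_neg : ∀ {χ}, ¬ Sat M s χ → ∀ {Δ : Set (Formula P I)}, (∀ θ ∈ Δ, Sat M s θ) →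
      ∀ θ ∈ insert (Formula.neg χ) Δ, Sat M s θ := fun hχ _ hΔ =>
    Set.forall_mem_insert.mpr ⟨hχ, hΔ⟩
  have hsφ := hs φ hφ
  match φ, hun, hsφ with
  | .bot, hun, _ | .atom _, hun, _ | .neg .bot, hun, _ | .neg (.atom _), hun, _ =>
    exact absurd trivial hun
  | .neg (.neg ψ), _, h => exact ⟨_, rfl, s, key (not_not.mp h) hs⟩
  | .and ψ χ, _, h => exact ⟨_, rfl, s, key h.1 (key h.2 hs)⟩
  | .neg (.and ψ χ), _, h =>
    by_cases hψ : Sat M s ψ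
    · exact ⟨_, .inr (.inr rfl), s, key hψ (key_neg (fun hχ => h ⟨hψ, hχ⟩) hs)⟩
    · by_cases hχ : Sat M s χ
      · exact ⟨_, .inr (.inl rfl), s, key_neg hψ (key hχ hs)⟩
      · exact ⟨_, .inl rfl, s, key_neg hψ (key_neg hχ hs)⟩
  | .know i ψ, _, h => exact ⟨_, rfl, s, key (h s ((M.equiv i).refl s)) hs⟩
  | .neg (.know i ψ), _, _ =>
    by_cases hψ : Sat M s ψ
    · exact ⟨_, .inr rfl, s, key hψ hs⟩
    · exact ⟨_, .inl rfl, s, key_neg hψ hs⟩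
  | .kh i ψ, _, _ =>
    by_cases hψ : Sat M s (.know i ψ)
    · exact ⟨_, .inr rfl, s, key hψ hs⟩
    · exact ⟨_, .inl rfl, s, key_neg hψ hs⟩
  | .neg (.kh i ψ), _, h => exact ⟨_, rfl, s, key_neg (fun hK => h (Sat.kh_of_know hK)) hs⟩

theorem SatIn.sigmaSet (h : SatIn M Γ) {i : I} {ψ : Formula P I}
    (hψ : Formula.neg (.know i ψ) ∈ Γ) : SatIn M (SigmaSet Γ i ψ) := by
  obtain ⟨s, hs⟩ := h
  have hsψ : ¬ ∀ t, M.sim i s t → Sat M t ψ := hs _ hψ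
  push Not at hsψ
  obtain ⟨t, hst, ht⟩ := hsψ
  refine ⟨t, Set.forall_mem_insert.mpr ⟨ht, ?_⟩⟩
  rintro φ ⟨hφ, ⟨χ, rfl⟩ | ⟨χ, rfl⟩ | ⟨χ, rfl⟩ | ⟨χ, rfl⟩⟩
  · exact (sat_know_congr hst).mp (hs _ hφ)
  · exact fun h => hs _ hφ ((sat_know_congr hst).mpr h)
  · exact (sat_kh_congr hst).mp (hs _ hφ)
  · exact fun h => hs _ hφ ((sat_kh_congr hst).mpr h)

theorem SatIn.know (h : SatIn M Γ) {i : I} {ψ : Formula P I}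
    (hψ : Formula.kh i ψ ∈ Γ) : SatIn M {Formula.know i ψ} := by
  obtain ⟨s, hs⟩ := h
  obtain ⟨t, ht⟩ := Sat.exists_know_of_kh (hs _ hψ)
  exact ⟨t, by rintro _ rfl; exact ht⟩

theorem SatIn.know_neg_kh (h : SatIn M Γ) {i : I} {ψ χ : Formula P I}
    (hψ : Formula.kh i ψ ∈ Γ) (hχ : Formula.neg (.kh i χ) ∈ Γ) :
    SatIn M {Formula.know i ψ, Formula.neg (.kh i χ)} := by
  obtain ⟨s, hs⟩ := h
  obtain ⟨t, ht, ht'⟩ := Sat.exists_know_and_not_kh (hs _ hψ) (hs _ hχ)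
  exact ⟨t, by rintro _ (rfl | rfl); exacts [ht, ht']⟩

/-- All children of an and-node satisfiable in `M` are satisfiable in `M`. -/
theorem SatIn.child_of_andNodeCond {T : LTree P I} {n m : T.Node} (h : SatIn M (T.label n))
    (hn : AndNodeCond T n) (hm : T.parent m = some n) : SatIn M (T.label m) := by
  rcases hn.2.2.2 m hm with ⟨i, ψ, -, hψ, hl, -⟩ | ⟨i, ψ, -, hψ, -, hl⟩ |
    ⟨i, ψ, χ, -, hχ, hψ, -, hl⟩ <;> rw [hl]
  · exact h.sigmaSet hψ
  · exact h.know hψ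
  · exact h.know_neg_kh hψ hχ

/-- Some child of an or-node satisfiable in `M` is satisfiable in `M`. -/
theorem SatIn.exists_child_of_orNodeCond {T : LTree P I} {n : T.Node}
    (h : SatIn M (T.label n)) (hn : OrNodeCond T n) :
    ∃ m, T.parent m = some n ∧ SatIn M (T.label m) := by
  obtain ⟨φ, hφ, hun, hex, -⟩ := hn
  obtain ⟨Δ, hΔ, hsat⟩ := h.exists_orOut hφ hun
  obtain ⟨m, hm, -, rfl, -⟩ := hex Δ hΔ
  exact ⟨m, hm, hsat⟩

end SatIn

/-- The nodes whose label, as well as the label of each of their ancestors, is satisfiable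
in `M`. -/
def satNodes (M : Model P I) : Set T.Node :=
  {n | ∀ m, Relation.ReflTransGen (fun a b => T.parent b = some a) m n → SatIn M (T.label m)}

theorem mem_satNodes_of_parent {T : LTree P I} {M : Model P I} {n m : T.Node}
    (hn : n ∈ satNodes T M) (hm : T.parent m = some n) (hsat : SatIn M (T.label m)) :
    m ∈ satNodes T M := by
  intro k hk
  rcases Relation.ReflTransGen.cases_tail hk with rfl | ⟨n', hkn, hp⟩
  · exact hsat
  · cases Option.some.inj (hm.symm.trans hp)
    exact hn k hkn

theorem root_mem_satNodes {T : LTree P I} {M : Model P I} (hsat : SatIn M (T.label T.root)) :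
    T.root ∈ satNodes T M := by
  intro k hk
  rcases Relation.ReflTransGen.cases_tail hk with rfl | ⟨n', -, hp⟩
  · exact hsat
  · rw [T.parent_root] at hp
    cases hp

theorem satIn_of_mem_satNodes {T : LTree P I} {M : Model P I} {n : T.Node}
    (hn : n ∈ satNodes T M) : SatIn M (T.label n) :=
  hn n .refl

theorem IsTableau.blockedBy_eq_none {φ0 : Formula P I} {T : LTree P I} (hT : IsTableau φ0 T)
    {n : T.Node} (hn : ¬ IsLeaf T n) : T.blockedBy n = none :=
  of_not_not fun hb => hn (hT.blocked_leaf n hb)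

theorem completeSubtree_satNodes {φ0 : Formula P I} {T : LTree P I} {M : Model P I} {s : M.W}
    (hT : IsTableau φ0 T) (hs : Sat M s φ0) : CompleteSubtree T (satNodes T M) := by
  refine ⟨⟨root_mem_satNodes ⟨s, ?_⟩, fun n hn m hm k hk => hn k (hk.tail hm)⟩,
    fun n hn hleaf hsatd m hm => ?_, fun n hn hleaf hsatd => ?_⟩
  · rw [hT.root_label]
    rintro _ rfl
    exact hs
  · have h := satIn_of_mem_satNodes hn
    exact mem_satNodes_of_parent hn hm (h.child_of_andNodeCond
      (hT.and_node n h.not_blatant (hT.blockedBy_eq_none hleaf) hsatd) hm)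
  · have h := satIn_of_mem_satNodes hn
    obtain ⟨m, hm, hsat⟩ := h.exists_child_of_orNodeCond
      (hT.or_node n h.not_blatant (hT.blockedBy_eq_none hleaf) hsatd)
    exact ⟨m, hm, mem_satNodes_of_parent hn hm hsat⟩

/-- Soundness: if `φ₀` is satisfiable then the tableau for `φ₀`
is not closed. -/
theorem tableau_soundness {P I : Type} (hI : ∃ i j : I, i ≠ j)
    (φ0 : Formula P I)
    (hsat : ∃ (M : Model P I) (s : M.W), Sat M s φ0)
    (T : LTree P I) (hT : IsTableau φ0 T) :
    ¬ TableauClosed T := by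
  obtain ⟨M, s, hs⟩ := hsat
  intro hclosed
  obtain ⟨n, hn, hbl⟩ := hclosed _ (completeSubtree_satNodes hT hs)
  exact (satIn_of_mem_satNodes hn).not_blatant hbl

end ELKh
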